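/- For a positive integer q and an integer n, define C̄_q(n) = (1/|SL₂(ℤ/qℤ)|) · Σ_{w ∈ SL₂(ℤ/qℤ)} c_q(d(w) − n), where d(w) is the bottom-right entry of w. Then C̄ is multiplicative in q: if q₁ and q₂ are coprime positive integers, then C̄_{q₁q₂}(n) = C̄_{q₁}(n) · C̄_{q₂}(n). -/

import Mathlib

/-- The Ramanujan sum `c_q(m) = Σ_{a ∈ (ℤ/qℤ)ˣ} e^{2πi a m / q}`. -/
noncomputable def ramanujanSum (q : ℕ) [NeZero q] (m : ℤ) : ℂ :=
  ∑ a : (ZMod q)ˣ,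
    Complex.exp (2 * Real.pi * Complex.I * (((a : ZMod q).val : ℂ) * (m : ℂ)) / (q : ℂ))

/-- The bottom-right entry of `w ∈ SL₂(ℤ/qℤ)`, lifted to `ℤ`. -/
def dEntry {q : ℕ} (w : Matrix.SpecialLinearGroup (Fin 2) (ZMod q)) : ℤ :=
  ((w : Matrix (Fin 2) (Fin 2) (ZMod q)) 1 1).val

/-- `C̄_q(n) = (1/|SL₂(ℤ/qℤ)|) · Σ_{w ∈ SL₂(ℤ/qℤ)} c_q(d(w) − n)`. -/
noncomputable def Cbar (q : ℕ) [NeZero q] (n : ℤ) : ℂ :=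
  (1 / (Fintype.card (Matrix.SpecialLinearGroup (Fin 2) (ZMod q)) : ℂ)) *
    ∑ w : Matrix.SpecialLinearGroup (Fin 2) (ZMod q), ramanujanSum q (dEntry w - n)

lemma ramanujanSum_eq_sum_stdAddChar (q : ℕ) [NeZero q] (m : ℤ) :
    ramanujanSum q m = ∑ a : (ZMod q)ˣ, ZMod.stdAddChar ((a : ZMod q) * (m : ZMod q)) := by
  refine Finset.sum_congr rfl fun a _ => ?_
  have h := ZMod.stdAddChar_coe (N := q) (((a : ZMod q).val : ℤ) * m)
  push_cast at h
  rw [ZMod.natCast_zmod_val] at h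
  exact h.symm

/-- The Ramanujan sum `c_q(m)` depends only on `m` modulo `q`. -/
lemma ramanujanSum_congr {q : ℕ} [NeZero q] {m m' : ℤ} (h : (m : ZMod q) = m') :
    ramanujanSum q m = ramanujanSum q m' := by
  simp only [ramanujanSum_eq_sum_stdAddChar, h]

lemma stdAddChar_mul_eq_of_bezout {q₁ q₂ : ℕ} [NeZero q₁] [NeZero q₂] {u v : ℤ}
    (h : u * q₂ + v * q₁ = 1) (x : ZMod (q₁ * q₂)) :
    ZMod.stdAddChar x =
      ZMod.stdAddChar ((u : ZMod q₁) * ZMod.castHom (dvd_mul_right q₁ q₂) (ZMod q₁) x) *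
      ZMod.stdAddChar ((v : ZMod q₂) * ZMod.castHom (dvd_mul_left q₂ q₁) (ZMod q₂) x) := by
  obtain ⟨x, rfl⟩ := ZMod.intCast_surjective x
  have h₁ : (q₁ : ℂ) ≠ 0 := NeZero.ne _
  have h₂ : (q₂ : ℂ) ≠ 0 := NeZero.ne _
  have hC : (u : ℂ) * q₂ + v * q₁ = 1 := by exact_mod_cast h
  rw [map_intCast (ZMod.castHom _ (ZMod q₁)), map_intCast (ZMod.castHom _ (ZMod q₂)),
    ← Int.cast_mul, ← Int.cast_mul, ZMod.stdAddChar_coe,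
    ZMod.stdAddChar_coe, ZMod.stdAddChar_coe, ← Complex.exp_add]
  congr 1
  push_cast
  field_simp
  linear_combination (-(x : ℂ)) * hC

/-- The Ramanujan sum is multiplicative in its modulus. -/
lemma ramanujanSum_mul {q₁ q₂ : ℕ} [NeZero q₁] [NeZero q₂] (hq : Nat.Coprime q₁ q₂) (m : ℤ) :
    ramanujanSum (q₁ * q₂) m = ramanujanSum q₁ m * ramanujanSum q₂ m := by
  obtain ⟨v, u, h⟩ := Nat.isCoprime_iff_coprime.mpr hq
  have huv : u * q₂ + v * q₁ = 1 := by linarith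
  have hu : (u : ZMod q₁) * q₂ = 1 := by
    simpa using congrArg (Int.cast : ℤ → ZMod q₁) huv
  have hv : (v : ZMod q₂) * q₁ = 1 := by
    simpa using congrArg (Int.cast : ℤ → ZMod q₂) huv
  let U : (ZMod q₁)ˣ := Units.mkOfMulEqOne _ _ hu
  let V : (ZMod q₂)ˣ := Units.mkOfMulEqOne _ _ hv
  let e : (ZMod (q₁ * q₂))ˣ ≃ (ZMod q₁)ˣ × (ZMod q₂)ˣ :=
    ((Units.mapEquiv (ZMod.chineseRemainder hq).toMulEquiv).trans .prodUnits).toEquiv.trans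
      ((Equiv.mulLeft U).prodCongr (Equiv.mulLeft V))
  simp only [ramanujanSum_eq_sum_stdAddChar]
  rw [Fintype.sum_mul_sum, ← Fintype.sum_prod_type', ← e.sum_comp]
  refine Finset.sum_congr rfl fun a _ => ?_
  have h₁ : ((e a).1 : ZMod q₁) =
      u * ZMod.castHom (dvd_mul_right q₁ q₂) (ZMod q₁) (a : ZMod (q₁ * q₂)) := by
    change (u : ZMod q₁) * ((RingHom.fst _ _).comp (ZMod.chineseRemainder hq).toRingHom) _ = _
    congr 2
    exact Subsingleton.elim _ _
  have h₂ : ((e a).2 : ZMod q₂) =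
      v * ZMod.castHom (dvd_mul_left q₂ q₁) (ZMod q₂) (a : ZMod (q₁ * q₂)) := by
    change (v : ZMod q₂) * ((RingHom.snd _ _).comp (ZMod.chineseRemainder hq).toRingHom) _ = _
    congr 2
    exact Subsingleton.elim _ _
  rw [h₁, h₂, stdAddChar_mul_eq_of_bezout huv, map_mul (ZMod.castHom _ _),
    map_mul (ZMod.castHom _ _), map_intCast (ZMod.castHom _ (ZMod q₁)),
    map_intCast (ZMod.castHom _ (ZMod q₂)), mul_assoc, mul_assoc]

/-- A decomposition of a ring as a product decomposes its special linear groups. -/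
lemma specialLinearGroup_map_prod_bijective {ι R S T : Type*} [Fintype ι] [DecidableEq ι]
    [CommRing R] [CommRing S] [CommRing T] (f : R →+* S) (g : R →+* T)
    (hfg : Function.Bijective (f.prod g)) :
    Function.Bijective fun w : Matrix.SpecialLinearGroup ι R =>
      (Matrix.SpecialLinearGroup.map f w, Matrix.SpecialLinearGroup.map g w) := by
  constructor
  · intro A B h
    obtain ⟨h₁, h₂⟩ := Prod.ext_iff.mp h
    ext i j
    exact hfg.1 (Prod.ext (congrArg (fun w => w.1 i j) h₁) (congrArg (fun w => w.1 i j) h₂))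
  · rintro ⟨A, B⟩
    choose M hM using fun i j => hfg.2 (A i j, B i j)
    have hA : f.mapMatrix (Matrix.of M) = A.1 := by
      ext i j
      exact congrArg Prod.fst (hM i j)
    have hB : g.mapMatrix (Matrix.of M) = B.1 := by
      ext i j
      exact congrArg Prod.snd (hM i j)
    have hdet : (Matrix.of M).det = 1 := by
      refine hfg.1 (Prod.ext ?_ ?_)
      · change f _ = f 1
        rw [RingHom.map_det, hA, A.2, map_one]
      · change g _ = g 1
        rw [RingHom.map_det, hB, B.2, map_one]
    exact ⟨⟨Matrix.of M, hdet⟩, Prod.ext (Subtype.ext hA) (Subtype.ext hB)⟩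

lemma castHom_prod_bijective {q₁ q₂ : ℕ} (hq : Nat.Coprime q₁ q₂) :
    Function.Bijective ((ZMod.castHom (dvd_mul_right q₁ q₂) (ZMod q₁)).prod
      (ZMod.castHom (dvd_mul_left q₂ q₁) (ZMod q₂))) := by
  rw [Subsingleton.elim (RingHom.prod _ _) (ZMod.chineseRemainder hq).toRingHom]
  exact (ZMod.chineseRemainder hq).bijective

/-- Lifting the bottom-right entry to `ℤ` is compatible with reduction to a smaller modulus. -/
lemma intCast_dEntry_map {q r : ℕ} [NeZero q] [NeZero r] (h : r ∣ q)
    (w : Matrix.SpecialLinearGroup (Fin 2) (ZMod q)) :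
    (dEntry w : ZMod r) =
      dEntry (Matrix.SpecialLinearGroup.map (ZMod.castHom h (ZMod r)) w) := by
  simp [dEntry, ← ZMod.natCast_val]

theorem stmt7 (q₁ q₂ : ℕ) [NeZero q₁] [NeZero q₂] (hq : Nat.Coprime q₁ q₂) (n : ℤ) :
    Cbar (q₁ * q₂) n = Cbar q₁ n * Cbar q₂ n := by
  have hbij := specialLinearGroup_map_prod_bijective (ι := Fin 2) _ _ (castHom_prod_bijective hq)
  unfold Cbar
  rw [Fintype.card_of_bijective hbij, Fintype.card_prod, mul_mul_mul_comm, Fintype.sum_mul_sum,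
    ← Fintype.sum_prod_type', ← hbij.sum_comp]
  congr 1
  · push_cast
    rw [one_div_mul_one_div]
  · refine Finset.sum_congr rfl fun w _ => ?_
    rw [ramanujanSum_mul hq]
    congr 1 <;> refine ramanujanSum_congr ?_ <;> push_cast <;> rw [intCast_dEntry_map]
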